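/- Let n ≥ 6 be even, ν = 2, c_W = n−1, h = n/2 − 1, and let c_R be an integer with c_R ≤ n−1; set c := c_W + c_R − n = c_R − 1 and assume c ≥ 2. Then every (n, n−1, c_R, 2, n/2−1, 2^K, q) multi-version code with side information (for two independent K-bit versions) satisfies q^{2c−1} ≥ 2^{2K}, i.e., its storage cost satisfies log₂ q ≥ 2K/(2c−1). -/

import Mathlib

open Finset

/-- The `h`-hop neighborhood `H_i = {i-h, …, i+h}` of server `i` on the ring `ZMod n`. -/
noncomputable def nbhd (n h : ℕ) (i : ZMod n) : Finset (ZMod n) :=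
  (Finset.Icc (-(h : ℤ)) (h : ℤ)).image (fun d : ℤ => (i + (d : ZMod n)))

/-- The set `A_S(u)` of servers that received version `u` in state `S`. -/
def received (n ν : ℕ) [NeZero n] (S : ZMod n → Finset (Fin ν)) (u : Fin ν) :
    Finset (ZMod n) :=
  Finset.univ.filter (fun j => u ∈ S j)

/-- An `(n, c_W, c_R, ν, h, 2^K, q)` multi-version code with side information.
Servers are indexed by `ZMod n`, versions by `Fin ν` (higher index = later version),
message values are `K`-bit strings `Fin K → Bool`, and stored symbols lie in `Fin q`.
The encoder of server `i` may depend only on the states of the servers in its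
`h`-hop neighborhood and on the values of the versions that server `i` received;
the decoder for a set `T` of `c_R` servers may depend only on the symbols stored by
the servers of `T`, and must return the value of some version at least as late as the
latest complete version whenever a complete version exists (and `NULL`, i.e. `none`,
otherwise). -/
structure MVCode (n cW cR ν h K q : ℕ) [NeZero n] where
  enc : ZMod n → (ZMod n → Finset (Fin ν)) → (Fin ν → (Fin K → Bool)) → Fin q
  dec : (ZMod n → Finset (Fin ν)) → Finset (ZMod n) → (ZMod n → Fin q) →
    Option (Fin K → Bool)
  enc_local_state : ∀ (i : ZMod n) (S S' : ZMod n → Finset (Fin ν))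
      (W : Fin ν → Fin K → Bool),
    (∀ j ∈ nbhd n h i, S j = S' j) → enc i S W = enc i S' W
  enc_local_word : ∀ (i : ZMod n) (S : ZMod n → Finset (Fin ν))
      (W W' : Fin ν → Fin K → Bool),
    (∀ u ∈ S i, W u = W' u) → enc i S W = enc i S W'
  dec_local : ∀ (S : ZMod n → Finset (Fin ν)) (T : Finset (ZMod n))
      (X X' : ZMod n → Fin q),
    (∀ j ∈ T, X j = X' j) → dec S T X = dec S T X'
  dec_correct : ∀ (S : ZMod n → Finset (Fin ν)) (W : Fin ν → Fin K → Bool)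
      (T : Finset (ZMod n)), T.card = cR →
    (∃ u : Fin ν, cW ≤ (received n ν S u).card) →
    ∃ m : Fin ν, (∀ u : Fin ν, cW ≤ (received n ν S u).card → u ≤ m) ∧
      dec S T (fun j => enc j S W) = some (W m)
  dec_null : ∀ (S : ZMod n → Finset (Fin ν)) (W : Fin ν → Fin K → Bool)
      (T : Finset (ZMod n)), T.card = cR →
    (∀ u : Fin ν, (received n ν S u).card < cW) →
    dec S T (fun j => enc j S W) = none

/-!
Let server `e` receive nothing, and let servers `i` and `j` lie outside each other's
neighborhoods. Server `j` cannot distinguish the state in which all servers but `e` hold the last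
two versions, so that the last one must be decoded, from the state in which moreover `i` misses
the last version, so that either one may be decoded. Fix the most frequent symbol of server `i` in
the second state, and let `r` be the number of servers read besides `e`, `i`, `j`, and
`R = q ^ r`. Each symbol `b` of server `j` then leaves a list `G b` of at most `R` candidates in
the second state and a list `D b` of at most `q * R` candidates in the first. Every pair of values
is resolved by these lists for some `b`, and double counting bounds the number `M` of values by
`M ^ 2 ≤ q * (q * R) ^ 2`, except for `q = 2`, where it gives `M ≤ 3 * R`; there it remains to use
that `M` and `R` are powers of two.
-/

section Arithmetic

lemma mul_sq_lt_sq_of_mul_le_mul {q M N a b : ℕ} (hM : q * N ^ 2 < M ^ 2) (ha : 0 < a)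
    (hab : a * M ≤ b * N) : q * a ^ 2 < b ^ 2 := by
  refine lt_of_mul_lt_mul_right (a := N ^ 2) ?_ (Nat.zero_le _)
  calc q * a ^ 2 * N ^ 2 = a ^ 2 * (q * N ^ 2) := by ring
    _ < a ^ 2 * M ^ 2 := Nat.mul_lt_mul_of_pos_left hM (by positivity)
    _ = (a * M) ^ 2 := by ring
    _ ≤ (b * N) ^ 2 := Nat.pow_le_pow_left hab 2
    _ = b ^ 2 * N ^ 2 := by ring

lemma sq_lt_mul_sq_of_mul_le_mul {q M N a b : ℕ} (hM : q * N ^ 2 < M ^ 2) (ha : 0 < a)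
    (hab : a * M ≤ q * b * N) : a ^ 2 < q * b ^ 2 := by
  refine lt_of_mul_lt_mul_left (a := q) ?_ q.zero_le
  calc q * a ^ 2 < (q * b) ^ 2 := mul_sq_lt_sq_of_mul_le_mul hM ha hab
    _ = q * (q * b ^ 2) := by ring

lemma eq_sq_add_one_or_two_of_sq_lt {k q : ℕ} (hkq : (k + 1) ^ 2 < q)
    (h : (q + k) ^ 2 < q * (k + 2) ^ 2) : q = (k + 1) ^ 2 + 1 ∨ q = (k + 1) ^ 2 + 2 := by
  by_contra hne
  obtain ⟨j, rfl⟩ : ∃ j, q = (k + 1) ^ 2 + 3 + j := Nat.exists_eq_add_of_le (by omega)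
  nlinarith [Nat.zero_le (j * k)]

lemma eq_zero_of_sq_lt {k q : ℕ} (hq : q = (k + 1) ^ 2 + 1 ∨ q = (k + 1) ^ 2 + 2)
    (h : (q * (k + 2) + k * (k + 1)) ^ 2 < q * (q + k + 1) ^ 2) : k = 0 := by
  by_contra hk
  obtain ⟨l, rfl⟩ := Nat.exists_eq_add_of_le' (Nat.one_le_iff_ne_zero.2 hk)
  -- Left side minus right side is now a polynomial in `l` with nonnegative coefficients.
  rcases hq with rfl | rfl <;> ring_nf at h <;> omega

-- In the application `M` counts the values, `m` those in a largest symbol class, `e` those in the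
-- class or on some list `G b`, and `k` of the `q` lists `G b` contain a given value of the class.
lemma sq_le_of_counting_bounds {q R M m e k l : ℕ} (hq2 : q ≠ 2) (hkl : k + l = q)
    (hm : M ≤ q * m) (hslots : k * m + e ≤ q * R + m) (hme : m ≤ e)
    (hMl : M ≤ k * (q * R) + l * R) (hMe : M ≤ k * (q * R) + e)
    (hdeg : k * R < m → (k + 1) * M ≤ q * (q * R) + k * e) :
    M ^ 2 ≤ q * (q * R) ^ 2 := by
  by_contra! hM
  set N := q * R
  have hlN : l * R ≤ N := Nat.mul_le_mul_right R (by omega)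
  have hq_lt : q < (k + 1) ^ 2 := by
    simpa using mul_sq_lt_sq_of_mul_le_mul (b := k + 1) hM one_pos (by linarith)
  obtain _ | k := k
  · obtain rfl : q = 0 := by omega
    simp_all
  have hk_lt : (k + 1) ^ 2 < q := by
    have hkM : (k + 1) * M ≤ q * N := calc
      (k + 1) * M ≤ (k + 1) * (q * m) := Nat.mul_le_mul_left _ hm
      _ = q * ((k + 1) * m) := by ring
      _ ≤ q * N := Nat.mul_le_mul_left q (by omega)
    simpa using sq_lt_mul_sq_of_mul_le_mul (b := 1) hM k.succ_pos (by simpa using hkM)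
  have hkR : (k + 1) * R < m := by
    by_contra! hmR
    have hMk : M ≤ (k + 1) * N := calc
      M ≤ q * m := hm
      _ ≤ q * ((k + 1) * R) := Nat.mul_le_mul_left q hmR
      _ = (k + 1) * N := by ring
    have := mul_sq_lt_sq_of_mul_le_mul hM one_pos (by simpa using hMk)
    omega
  have hqe : q * e + k * M ≤ q * N := by
    have hkme : k * m + e ≤ N := by linarith
    linarith [Nat.mul_le_mul_left k hm, Nat.mul_le_mul_left q hkme]
  have hA : (q + k) ^ 2 < q * (k + 2) ^ 2 :=
    sq_lt_mul_sq_of_mul_le_mul hM (by omega) (by linarith [Nat.mul_le_mul_left q hMe])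
  have hB : (q * (k + 2) + k * (k + 1)) ^ 2 < q * (q + k + 1) ^ 2 :=
    sq_lt_mul_sq_of_mul_le_mul hM (Nat.add_pos_left (Nat.mul_pos (by omega) (by omega)) _) (by
      linarith [Nat.mul_le_mul_left q (hdeg hkR), Nat.mul_le_mul_left (k + 1) hqe])
  have hq_eq := eq_sq_add_one_or_two_of_sq_lt hk_lt hA
  obtain rfl := eq_zero_of_sq_lt hq_eq hB
  obtain rfl : q = 3 := by omega
  obtain rfl : l = 2 := by omega
  have h35 : 3 * M ≤ 5 * N := by omega
  simpa using mul_sq_lt_sq_of_mul_le_mul hM three_pos h35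

end Arithmetic

section ListDecoding

variable {α ι : Type*}

/-- The lists `G b` and `D b` resolve all pairs `(w, x)` with `w ∈ C`: some index `b` lists `x` in
`D b` and one of `w`, `x` in `G b`. The index is the symbol of the server that cannot distinguish
the two states, and `G b`, `D b` are the values that each state leaves possible given `b`. -/
def ResolvesPairs (C : Finset α) (G D : ι → Finset α) : Prop :=
  ∀ w ∈ C, ∀ x, ∃ b, x ∈ D b ∧ (w ∈ G b ∨ x ∈ G b)

variable [Fintype ι] {C : Finset α} {G D : ι → Finset α} {R N : ℕ}

lemma sum_card_add_card_union_biUnion_le [DecidableEq α] (C : Finset α) (hG : ∀ b, #(G b) ≤ R) :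
    ∑ w ∈ C, #{b | w ∈ G b} + #(C ∪ univ.biUnion G) ≤ Fintype.card ι * R + #C := by
  have hunion : #(C ∪ univ.biUnion G) ≤ #C + ∑ b, #(G b \ C) := by
    have hsub : C ∪ univ.biUnion G ⊆ C ∪ univ.biUnion fun b => G b \ C := by
      intro x
      by_cases hx : x ∈ C <;> simp [hx]
    exact (card_le_card hsub).trans <| (card_union_le _ _).trans <|
      Nat.add_le_add_left card_biUnion_le _
  have hcount : ∑ w ∈ C, #{b | w ∈ G b} = ∑ b, #(G b ∩ C) := by
    simpa [bipartiteAbove, bipartiteBelow, filter_mem_eq_inter, inter_comm] using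
      sum_card_bipartiteAbove_eq_sum_card_bipartiteBelow (s := C) (t := univ) fun w b => w ∈ G b
  have hsplit : ∑ b, #(G b ∩ C) + ∑ b, #(G b \ C) ≤ Fintype.card ι * R := by
    rw [← sum_add_distrib]
    simpa [card_inter_add_card_sdiff] using
      sum_le_card_nsmul univ (fun b => #(G b)) R fun b _ => hG b
  omega

namespace ResolvesPairs

section Covers

variable [DecidableEq α]

lemma card_le_card_mem_mul (h : ResolvesPairs C G D) (hG : ∀ b, #(G b) ≤ R) {x : α}
    (hx : x ∉ univ.biUnion G) : #C ≤ #{b | x ∈ D b} * R := by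
  have hcover : C ⊆ ({b | x ∈ D b} : Finset ι).biUnion G := by
    intro w hw
    obtain ⟨b, hxD, hwx⟩ := h w hw x
    have hxG : x ∉ G b := fun hxG => hx (mem_biUnion.2 ⟨b, mem_univ b, hxG⟩)
    exact mem_biUnion.2 ⟨b, by simpa, hwx.resolve_right hxG⟩
  exact (card_le_card hcover).trans (card_biUnion_le_card_mul _ _ _ fun b _ => hG b)

variable [Fintype α]

lemma card_le_add_card_notMem_mul (h : ResolvesPairs C G D) (hG : ∀ b, #(G b) ≤ R)
    (hD : ∀ b, #(D b) ≤ N) {w : α} (hw : w ∈ C) :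
    Fintype.card α ≤ #{b | w ∈ G b} * N + #{b | w ∉ G b} * R := by
  have hcover : univ ⊆ ({b | w ∈ G b} : Finset ι).biUnion D ∪
      ({b | w ∉ G b} : Finset ι).biUnion G := by
    intro x _
    obtain ⟨b, hxD, hwx⟩ := h w hw x
    by_cases hb : w ∈ G b
    · exact mem_union_left _ (mem_biUnion.2 ⟨b, by simpa, hxD⟩)
    · exact mem_union_right _ (mem_biUnion.2 ⟨b, by simpa, hwx.resolve_left hb⟩)
  exact (card_le_card hcover).trans <| (card_union_le _ _).trans <| Nat.add_le_add
    (card_biUnion_le_card_mul _ _ _ fun b _ => hD b)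
    (card_biUnion_le_card_mul _ _ _ fun b _ => hG b)

lemma card_le_add_card_union (h : ResolvesPairs C G D) (hD : ∀ b, #(D b) ≤ N) {w : α}
    (hw : w ∈ C) :
    Fintype.card α ≤ #{b | w ∈ G b} * N + #(C ∪ univ.biUnion G) := by
  have hcover : univ ⊆ ({b | w ∈ G b} : Finset ι).biUnion D ∪ (C ∪ univ.biUnion G) := by
    intro x _
    obtain ⟨b, hxD, hwx⟩ := h w hw x
    by_cases hb : w ∈ G b
    · exact mem_union_left _ (mem_biUnion.2 ⟨b, by simpa, hxD⟩)
    · exact mem_union_right _ (mem_union_right _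
        (mem_biUnion.2 ⟨b, mem_univ b, hwx.resolve_left hb⟩))
  exact (card_le_card hcover).trans <| (card_union_le _ _).trans <| Nat.add_le_add_right
    (card_biUnion_le_card_mul _ _ _ fun b _ => hD b) _

lemma succ_mul_card_le (h : ResolvesPairs C G D) (hG : ∀ b, #(G b) ≤ R) (hD : ∀ b, #(D b) ≤ N)
    {r : ℕ} (hr : r * R < #C) :
    (r + 1) * Fintype.card α ≤ Fintype.card ι * N + r * #(C ∪ univ.biUnion G) := by
  obtain ⟨w, hw⟩ := card_pos.1 ((r * R).zero_le.trans_lt hr)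
  have hpoint (x : α) : r + 1 ≤ #{b | x ∈ D b} + if x ∈ C ∪ univ.biUnion G then r else 0 := by
    split_ifs with hx
    · obtain ⟨b, hxD, -⟩ := h w hw x
      have : 0 < #{b | x ∈ D b} := card_pos.2 ⟨b, by simpa⟩
      omega
    · have := hr.trans_le (h.card_le_card_mem_mul hG fun hxG => hx (mem_union_right _ hxG))
      exact lt_of_mul_lt_mul_right this R.zero_le
  have hcount : ∑ x, #{b | x ∈ D b} ≤ Fintype.card ι * N := by
    have hswap : ∑ x, #{b | x ∈ D b} = ∑ b, #(D b) := by
      simpa [bipartiteAbove, bipartiteBelow] using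
        sum_card_bipartiteAbove_eq_sum_card_bipartiteBelow (s := univ) (t := univ)
          fun x b => x ∈ D b
    rw [hswap]
    exact sum_le_card_nsmul univ _ N fun b _ => hD b
  calc (r + 1) * Fintype.card α = ∑ _x : α, (r + 1) := by simp [mul_comm]
    _ ≤ ∑ x, (#{b | x ∈ D b} + if x ∈ C ∪ univ.biUnion G then r else 0) :=
      sum_le_sum fun x _ => hpoint x
    _ = ∑ x, #{b | x ∈ D b} + r * #(C ∪ univ.biUnion G) := by
      rw [sum_add_distrib, sum_ite_mem, univ_inter, sum_const, smul_eq_mul, mul_comm r]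
    _ ≤ _ := Nat.add_le_add_right hcount _

end Covers

variable [Fintype α]

theorem card_sq_le (h : ResolvesPairs C G D) (hG : ∀ b, #(G b) ≤ R)
    (hD : ∀ b, #(D b) ≤ Fintype.card ι * R) (hC : Fintype.card α ≤ Fintype.card ι * #C)
    (hι : Fintype.card ι ≠ 2) :
    Fintype.card α ^ 2 ≤ Fintype.card ι * (Fintype.card ι * R) ^ 2 := by
  classical
  obtain rfl | hne := C.eq_empty_or_nonempty
  · simp_all
  obtain ⟨w, hw, hmin⟩ := exists_min_image C (fun w => #{b | w ∈ G b}) hne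
  have hslots : #{b | w ∈ G b} * #C + #(C ∪ univ.biUnion G) ≤ Fintype.card ι * R + #C := by
    refine le_trans (Nat.add_le_add_right ?_ _) (sum_card_add_card_union_biUnion_le C hG)
    simpa [mul_comm] using card_nsmul_le_sum C _ _ hmin
  exact sq_le_of_counting_bounds hι (card_filter_add_card_filter_not _) hC hslots
    (card_le_card subset_union_left) (h.card_le_add_card_notMem_mul hG hD hw)
    (h.card_le_add_card_union hD hw) (h.succ_mul_card_le hG hD)

-- For two indices `card_sq_le` fails: `3 * R` values occur if `C` is the union of two disjoint
-- lists `G b` of size `R` and each `D b` adds the same `R` further values to `G b`.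
theorem card_le_three_mul (h : ResolvesPairs C G D) (hG : ∀ b, #(G b) ≤ R)
    (hD : ∀ b, #(D b) ≤ 2 * R) (hC : Fintype.card α ≤ 2 * #C) (hι : Fintype.card ι = 2) :
    Fintype.card α ≤ 3 * R := by
  classical
  by_cases hall : ∀ w ∈ C, 2 ≤ #{b | w ∈ G b}
  · have hsum := card_nsmul_le_sum C _ _ hall
    have hslots := sum_card_add_card_union_biUnion_le C hG
    have hsub : #C ≤ #(C ∪ univ.biUnion G) := card_le_card subset_union_left
    rw [hι] at hslots
    rw [smul_eq_mul] at hsum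
    omega
  · push Not at hall
    obtain ⟨w, hw, hlt⟩ := hall
    have hsplit := card_filter_add_card_filter_not (s := (univ : Finset ι)) fun b => w ∈ G b
    have hle := h.card_le_add_card_notMem_mul hG hD hw
    rw [card_univ, hι] at hsplit
    nlinarith

end ResolvesPairs

lemma exists_card_le_card_mul_card_fiber {α β : Type*} [Fintype α] [Fintype β] [DecidableEq β]
    [Nonempty β] (f : α → β) :
    ∃ y, Fintype.card α ≤ Fintype.card β * #{x | f x = y} := by
  obtain ⟨y, -, hy⟩ := exists_le_of_sum_le (s := (univ : Finset β)) univ_nonempty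
    (f := fun _ => Fintype.card α) (g := fun y => Fintype.card β * #{x | f x = y}) <| by
      rw [← mul_sum, ← card_eq_sum_card_fiberwise fun _ _ => mem_univ _]
      simp
  exact ⟨y, hy⟩

end ListDecoding

section Neighborhood

variable (n h : ℕ) (i : ZMod n)

lemma self_mem_nbhd : i ∈ nbhd n h i :=
  mem_image.2 ⟨0, by simp, by simp⟩

lemma card_nbhd_le : #(nbhd n h i) ≤ 2 * h + 1 := by
  refine card_image_le.trans ?_
  rw [Int.card_Icc]
  omega

end Neighborhood

namespace MVCode

variable {n cW cR ν h K q : ℕ} [NeZero n]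

open Classical in
/-- The values that the decoder for `T` can output in state `S` when the symbols of the servers in
`P` are known to be those of `x`. -/
noncomputable def decodable (code : MVCode n cW cR ν h K q) (S : ZMod n → Finset (Fin ν))
    (T P : Finset (ZMod n)) (x : ZMod n → Fin q) : Finset (Fin K → Bool) :=
  {w | ∃ X : ZMod n → Fin q, (∀ k ∈ P, X k = x k) ∧ code.dec S T X = some w}

variable (code : MVCode n cW cR ν h K q)

lemma card_decodable_le (S : ZMod n → Finset (Fin ν)) (T P : Finset (ZMod n))
    (x : ZMod n → Fin q) : #(code.decodable S T P x) ≤ q ^ #(T \ P) := by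
  have hX (w : ↥(code.decodable S T P x)) :
      ∃ X : ZMod n → Fin q, (∀ k ∈ P, X k = x k) ∧ code.dec S T X = some w.1 := by
    simpa [decodable] using w.2
  choose X hXP hXdec using hX
  have hinj : Function.Injective fun w (k : ↥(T \ P)) => X w k := by
    intro w w' heq
    have hagree : ∀ k ∈ T, X w k = X w' k := by
      intro k hk
      by_cases hkP : k ∈ P
      · rw [hXP w k hkP, hXP w' k hkP]
      · exact congrFun heq ⟨k, mem_sdiff.2 ⟨hk, hkP⟩⟩
    have hdec := code.dec_local S T _ _ hagree
    rw [hXdec, hXdec] at hdec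
    exact Subtype.ext (Option.some_injective _ hdec)
  simpa only [Fintype.card_fun, Fintype.card_coe, Fintype.card_fin] using
    Fintype.card_le_of_injective _ hinj

lemma mem_decodable_of_dec_enc_eq_some {S : ZMod n → Finset (Fin ν)} {T P : Finset (ZMod n)}
    {x : ZMod n → Fin q} {W : Fin ν → Fin K → Bool} {w : Fin K → Bool}
    (hdec : code.dec S T (fun k => code.enc k S W) = some w)
    (hx : ∀ k ∈ P, code.enc k S W = x k) : w ∈ code.decodable S T P x := by
  simpa [decodable] using ⟨_, hx, hdec⟩

end MVCode

section States

variable {n ν : ℕ}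

/-- The state in which server `e` received nothing and all other servers received the versions
`u` and `v`. -/
def fullState (e : ZMod n) (u v : Fin ν) : ZMod n → Finset (Fin ν) :=
  Function.update (fun _ => {u, v}) e ∅

/-- The state `fullState e u v`, except that server `i` received only version `u`. -/
def partialState (e i : ZMod n) (u v : Fin ν) : ZMod n → Finset (Fin ν) :=
  Function.update (fullState e u v) i {u}

lemma le_card_received [NeZero n] {cW : ℕ} (hcW : cW < n) {e : ZMod n}
    {S : ZMod n → Finset (Fin ν)} {u : Fin ν} (hS : ∀ k ≠ e, u ∈ S k) :
    cW ≤ #(received n ν S u) := by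
  have hsub : univ.erase e ⊆ received n ν S u := fun k hk => by
    simpa [received] using hS k (ne_of_mem_erase hk)
  have hle := card_le_card hsub
  rw [card_erase_of_mem (mem_univ e), card_univ, ZMod.card] at hle
  omega

end States

namespace MVCode

variable {n cW cR ν h K q : ℕ} [NeZero n] (code : MVCode n cW cR ν h K q)
  {T : Finset (ZMod n)} {e i j : ZMod n} {u v : Fin ν}

lemma dec_fullState (hcW : cW < n) (hT : #T = cR) (hv : IsMax v) (W : Fin ν → Fin K → Bool) :
    code.dec (fullState e u v) T (fun k => code.enc k (fullState e u v) W) = some (W v) := by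
  have hcomplete : cW ≤ #(received n ν (fullState e u v) v) :=
    le_card_received hcW (e := e) fun k hk => by simp [fullState, hk]
  obtain ⟨m, hm, hdec⟩ := code.dec_correct _ W T hT ⟨v, hcomplete⟩
  rw [hdec, hv.eq_of_le (hm v hcomplete)]

lemma dec_partialState (hcW : cW < n) (hT : #T = cR) (huv : u ⋖ v) (hv : IsMax v)
    (W : Fin ν → Fin K → Bool) :
    ∃ m, (m = u ∨ m = v) ∧
      code.dec (partialState e i u v) T (fun k => code.enc k (partialState e i u v) W) =
        some (W m) := by
  have hcomplete : cW ≤ #(received n ν (partialState e i u v) u) :=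
    le_card_received hcW (e := e) fun k hk => by
      by_cases hki : k = i <;> simp [partialState, fullState, hk, hki]
  obtain ⟨m, hm, hdec⟩ := code.dec_correct _ W T hT ⟨u, hcomplete⟩
  refine ⟨m, ?_, hdec⟩
  rcases (hm u hcomplete).eq_or_lt with hum | hum
  · exact Or.inl hum.symm
  · exact Or.inr (hv.eq_of_le (huv.ge_of_gt hum)).symm

lemma enc_eq_of_state_eq_empty {S : ZMod n → Finset (Fin ν)} (hS : S e = ∅)
    (W W' : Fin ν → Fin K → Bool) : code.enc e S W = code.enc e S W' :=
  code.enc_local_word e S W W' (by simp [hS])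

lemma enc_partialState_eq_enc_fullState (hij : i ∉ nbhd n h j) (W : Fin ν → Fin K → Bool) :
    code.enc j (partialState e i u v) W = code.enc j (fullState e u v) W :=
  code.enc_local_state j _ _ W fun _ hk =>
    Function.update_of_ne (ne_of_mem_of_not_mem hk hij) _ _

/-- The values that remain possible for version `v` in the state `fullState e u v` when server `j`
stores `b`. -/
noncomputable def fullList (T : Finset (ZMod n)) (e j : ZMod n) (u v : Fin ν) (b : Fin q) :
    Finset (Fin K → Bool) :=
  code.decodable (fullState e u v) T {e, j}
    (Function.update (fun k => code.enc k (fullState e u v) fun _ _ => false) j b)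

/-- The values that remain possible for the decoded version in the state `partialState e i u v` when
server `i` stores `a` and server `j` stores `b`. -/
noncomputable def partialList (T : Finset (ZMod n)) (e i j : ZMod n) (u v : Fin ν) (a b : Fin q) :
    Finset (Fin K → Bool) :=
  code.decodable (partialState e i u v) T {e, i, j} <| Function.update
    (Function.update (fun k => code.enc k (partialState e i u v) fun _ _ => false) i a) j b

lemma resolvesPairs (hcW : cW < n) (hT : #T = cR) (hei : e ≠ i) (hej : e ≠ j)
    (hij : i ∉ nbhd n h j) (huv : u ⋖ v) (hv : IsMax v) (a : Fin q) :
    ResolvesPairs {w | code.enc i (partialState e i u v) (fun _ => w) = a}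
      (code.partialList T e i j u v a) (code.fullList T e j u v) := by
  intro w hw x
  have hne_ij : i ≠ j := fun hij' => hij (hij' ▸ self_mem_nbhd n h i)
  set W : Fin ν → Fin K → Bool := Function.update (fun _ => w) v x
  have hWu : W u = w := Function.update_of_ne huv.lt.ne _ _
  have hWv : W v = x := Function.update_self _ _ _
  have hi : code.enc i (partialState e i u v) W = a := by
    rw [← (mem_filter.1 hw).2]
    exact code.enc_local_word i _ _ _ (by simp [partialState, hWu])
  refine ⟨code.enc j (fullState e u v) W, ?_, ?_⟩
  · refine code.mem_decodable_of_dec_enc_eq_some (hWv ▸ code.dec_fullState hcW hT hv W) ?_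
    simpa [hej] using code.enc_eq_of_state_eq_empty (by simp [fullState]) _ _
  · have hmem {y : Fin K → Bool} (hy : code.dec (partialState e i u v) T
        (fun k => code.enc k (partialState e i u v) W) = some y) :
        y ∈ code.partialList T e i j u v a (code.enc j (fullState e u v) W) := by
      refine code.mem_decodable_of_dec_enc_eq_some hy ?_
      simpa [hei, hej, hne_ij, hi, code.enc_partialState_eq_enc_fullState hij] using
        code.enc_eq_of_state_eq_empty (by simp [partialState, fullState, hei]) _ _
    obtain ⟨m, rfl | rfl, hdec⟩ := code.dec_partialState (e := e) (i := i) hcW hT huv hv W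
    · exact Or.inl (hmem (hWu ▸ hdec))
    · exact Or.inr (hmem (hWv ▸ hdec))

theorem two_pow_two_mul_le {r : ℕ} (code : MVCode n cW (r + 3) ν h K q) (hcW : cW < n)
    (hT : #T = r + 3) (heT : {e, i, j} ⊆ T) (hei : e ≠ i) (hej : e ≠ j) (hij : i ∉ nbhd n h j)
    (huv : u ⋖ v) (hv : IsMax v) : 2 ^ (2 * K) ≤ q ^ (2 * r + 3) := by
  have hne_ij : i ≠ j := fun hij' => hij (hij' ▸ self_mem_nbhd n h i)
  have : Nonempty (Fin q) := ⟨code.enc i (fullState e u v) fun _ _ => false⟩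
  obtain ⟨a, ha⟩ := exists_card_le_card_mul_card_fiber
    fun w : Fin K → Bool => code.enc i (partialState e i u v) fun _ => w
  have hres := code.resolvesPairs hcW hT hei hej hij huv hv a
  have hG (b : Fin q) : #(code.partialList T e i j u v a b) ≤ q ^ r := by
    refine (code.card_decodable_le _ _ _ _).trans_eq ?_
    rw [card_sdiff_of_subset heT, hT, card_eq_three.2 ⟨e, i, j, hei, hej, hne_ij, rfl⟩,
      Nat.add_sub_cancel]
  have hD (b : Fin q) : #(code.fullList T e j u v b) ≤ q * q ^ r := by
    have hsub : {e, j} ⊆ T := (insert_subset_insert e (subset_insert i {j})).trans heT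
    refine (code.card_decodable_le _ _ _ _).trans_eq ?_
    rw [card_sdiff_of_subset hsub, hT, card_pair hej, ← pow_succ']
    rfl
  have hcard : Fintype.card (Fin K → Bool) = 2 ^ K := by simp
  rw [hcard, Fintype.card_fin] at ha
  obtain rfl | hq := eq_or_ne q 2
  · have hle := hres.card_le_three_mul hG hD (by rwa [hcard]) (Fintype.card_fin 2)
    have hlt : 2 ^ K < 2 ^ (r + 2) := by
      rw [hcard] at hle
      exact hle.trans_lt (by rw [pow_add]; have := Nat.two_pow_pos r; omega)
    have := (Nat.pow_lt_pow_iff_right one_lt_two).1 hlt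
    exact Nat.pow_le_pow_right two_pos (by omega)
  · have hle := hres.card_sq_le hG (by simpa using hD) (by simpa using ha) (by simpa using hq)
    rw [hcard, Fintype.card_fin] at hle
    calc 2 ^ (2 * K) = (2 ^ K) ^ 2 := by rw [← pow_mul, mul_comm]
      _ ≤ q * (q * q ^ r) ^ 2 := hle
      _ = q ^ (2 * r + 3) := by ring

end MVCode

theorem converse_cw_eq_n_sub_one_general {n cW cR ν h K q : ℕ} [NeZero n] (hν : 2 ≤ ν)
    (hcW : cW < n) (hcR : 3 ≤ cR) (hcRn : cR ≤ n) (hh : 2 * h + 1 < n)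
    (code : MVCode n cW cR ν h K q) : 2 ^ (2 * K) ≤ q ^ (2 * cR - 3) := by
  obtain ⟨ν, rfl⟩ := Nat.exists_eq_add_of_le' hν
  obtain ⟨r, rfl⟩ := Nat.exists_eq_add_of_le' hcR
  have huv : (Fin.last ν).castSucc ⋖ Fin.last (ν + 1) := by
    simp [Fin.covBy_iff]
  obtain ⟨i, -, hi⟩ := exists_mem_notMem_of_card_lt_card (s := nbhd n h 0) (t := univ)
    ((card_nbhd_le n h 0).trans_lt (by rwa [card_univ, ZMod.card]))
  obtain ⟨T, hiT, -, hT⟩ := exists_subsuperset_card_eq (n := r + 3) (subset_univ {i, 0})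
    (card_le_two.trans (by omega)) (by rwa [card_univ, ZMod.card])
  obtain ⟨e, heT, he⟩ := exists_mem_notMem_of_card_lt_card (s := {i, 0}) (t := T)
    (card_le_two.trans_lt (by omega))
  rw [mem_insert, mem_singleton, not_or] at he
  rw [show 2 * (r + 3) - 3 = 2 * r + 3 by omega]
  exact code.two_pow_two_mul_le hcW hT (insert_subset heT hiT) he.1 he.2 hi huv isMax_top

/-- Theorem 3, converse: for `n ≥ 6` even, `ν = 2`, `c_W = n-1`,
`h = n/2 - 1`, `c_R ≤ n-1` and `c := c_R - 1 ≥ 2`, every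
`(n, n-1, c_R, 2, n/2-1, 2^K, q)` multi-version code with side information satisfies
`q^(2c-1) ≥ 2^(2K)`, i.e. its storage cost satisfies `log₂ q ≥ 2K/(2c-1)`. -/
theorem converse_cw_eq_n_sub_one (n cR c K q : ℕ) [NeZero n] (hn : 6 ≤ n)
    (heven : Even n) (hcRn : cR ≤ n - 1) (hc : c = cR - 1) (hc2 : 2 ≤ c)
    (hK : 0 < K) (hq : 0 < q)
    (code : MVCode n (n - 1) cR 2 (n / 2 - 1) K q) :
    2 ^ (2 * K) ≤ q ^ (2 * c - 1) := by
  rw [show 2 * c - 1 = 2 * cR - 3 by omega]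
  exact converse_cw_eq_n_sub_one_general le_rfl (by omega) (by omega) (by omega) (by omega) code
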